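/- arXiv:math/0507156 — 2 statements merged into one kernel-verified Lean document; each statement's English description precedes it below -/
import Mathlib

section
/- Let m ≥ 2 be an integer and let f(t) = ∑_{k=−(m−1)}^{m−1} a_k e^{ikt} and g(t) = ∑_{k=−(m−1)}^{m−1} b_k e^{ikt} be trigonometric polynomials with complex coefficients satisfying a_{−k} = conj(a_k) and b_{−k} = conj(b_k) for all k (so f and g are real-valued, and a₀, b₀ are real). If f(t) ≤ g(t) for all t ∈ ℝ, then: (i) |b_k − a_k| ≤ (b₀ − a₀) · cos(π/(⌊(m−1)/k⌋ + 2)) for every 1 ≤ k ≤ m−1; and (ii) a₀/2 + ∑_{k=1}^{m−1} r^k |a_k| ≤ b₀/2 + ∑_{k=1}^{m−1} r^k |b_k| for every r ∈ [0, t_m]. -/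
open scoped BigOperators

/-- `fm m t = ∑_{k=1}^{m-1} t^k * cos (π / (⌊(m-1)/k⌋ + 2))`, where `(m-1)/k` is the
integer part of `(m-1)/k` (natural number division). -/
noncomputable def fm (m : ℕ) (t : ℝ) : ℝ :=
  ∑ k ∈ Finset.Icc 1 (m - 1), t ^ k * Real.cos (Real.pi / (((m - 1) / k + 2 : ℕ) : ℝ))

/-!
Put `c = b - a`, so that `F t = ∑ c k e^{ikt}` is nonnegative of degree `n = m - 1`. Fix
`1 ≤ k ≤ n` and `φ : ℝ`, let `p = ⌊n / k⌋ + 2`, and sample at the `p * k` equispaced nodes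
`x j = φ + (2 * j + 1) * π / (p * k)`. As `n + k < p * k`, averaging over the nodes computes the
coefficients `c 0` and `c k` of `F` exactly, while at every node
`cos (k * (x j - φ)) = cos ((2 * j + 1) * π / p) ≤ cos (π / p)`. Averaging
`F (x j) * (cos (π / p) - cos (k * (x j - φ))) ≥ 0` gives `re (e^{ikφ} * c k) ≤ cos (π / p) * c 0`,
and a suitable `φ` turns the left side into `‖c k‖`. The second claim follows from the first by the
triangle inequality, weighted by `r ^ k` and summed over `k`.
-/

open Complex Finset
open scoped Real ComplexConjugate

/-- The trigonometric polynomial `∑_{|k| ≤ n} c k * e^{ikt}`; only the values of `c` on `[-n, n]`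
matter. -/
noncomputable def trigPoly (n : ℕ) (c : ℤ → ℂ) (t : ℝ) : ℂ :=
  ∑ k ∈ Icc (-n : ℤ) n, c k * exp (I * k * t)

/-- The constant `cos (π / (⌊n/k⌋ + 2))` of the Egerváry–Szász inequality, which bounds the `k`-th
coefficient of a nonnegative trigonometric polynomial of degree `n` by its mean. -/
noncomputable def egervarySzaszConst (n k : ℕ) : ℝ :=
  Real.cos (π / (n / k + 2 : ℕ))

section Quadrature

variable {M n : ℕ}

lemma sum_exp_equispaced (hM : M ≠ 0) (l : ℤ) (θ : ℝ) :
    ∑ j ∈ range M, exp (I * l * ↑(θ + 2 * π * j / M)) =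
      if (M : ℤ) ∣ l then M * exp (I * l * θ) else 0 := by
  have hζ := Complex.isPrimitiveRoot_exp M hM
  set ζ := exp (2 * π * I / M)
  have hnode (j : ℕ) : exp (I * l * ↑(θ + 2 * π * j / M)) = exp (I * l * θ) * (ζ ^ l) ^ j := by
    rw [← exp_int_mul, ← exp_nat_mul, ← exp_add]
    push_cast
    ring_nf
  simp only [hnode, ← mul_sum]
  split_ifs with hl
  · simp [(hζ.zpow_eq_one_iff_dvd l).2 hl, mul_comm]
  · have hζl : ζ ^ l ≠ 1 := mt (hζ.zpow_eq_one_iff_dvd l).1 hl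
    have hζM : (ζ ^ l) ^ M = 1 := by
      rw [← zpow_natCast, zpow_comm, zpow_natCast, hζ.pow_eq_one, one_zpow]
    rw [geom_sum_eq hζl, hζM, sub_self, zero_div, mul_zero]

lemma sum_trigPoly_mul_exp_equispaced {l : ℤ} (hl : |l| ≤ n) (hM : n + |l| < M) (c : ℤ → ℂ)
    (θ : ℝ) :
    ∑ j ∈ range M, trigPoly n c (θ + 2 * π * j / M) * exp (-(I * l * ↑(θ + 2 * π * j / M))) =
      M * c l := by
  have hM0 : M ≠ 0 := by have := abs_nonneg l; lia
  have hinner (k : ℤ) (hk : k ∈ Icc (-n : ℤ) n) :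
      ∑ j ∈ range M, c k * exp (I * ↑(k - l) * ↑(θ + 2 * π * j / M)) =
        if k = l then M * c k else 0 := by
    have hkl : |k - l| < M := by linarith [abs_sub k l, abs_le.2 (mem_Icc.1 hk)]
    have hdvd : (M : ℤ) ∣ k - l ↔ k = l :=
      ⟨fun h => sub_eq_zero.1 (Int.eq_zero_of_abs_lt_dvd h hkl), fun h => by simp [h]⟩
    rw [← mul_sum, sum_exp_equispaced hM0, if_congr hdvd rfl rfl]
    split_ifs with h
    · simp [h, mul_comm]
    · exact mul_zero _
  calc ∑ j ∈ range M, trigPoly n c (θ + 2 * π * j / M) * exp (-(I * l * ↑(θ + 2 * π * j / M)))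
      = ∑ j ∈ range M, ∑ k ∈ Icc (-n : ℤ) n,
          c k * exp (I * ↑(k - l) * ↑(θ + 2 * π * j / M)) := by
        refine sum_congr rfl fun j _ => ?_
        rw [trigPoly, sum_mul]
        refine sum_congr rfl fun k _ => ?_
        rw [mul_assoc, ← exp_add]
        push_cast
        ring_nf
    _ = ∑ k ∈ Icc (-n : ℤ) n, if k = l then M * c k else 0 := by
        rw [sum_comm]
        exact sum_congr rfl hinner
    _ = M * c l := by
        rw [sum_ite_eq', if_pos (mem_Icc.2 (abs_le.1 hl))]

lemma sum_trigPoly_equispaced (hM : n < M) (c : ℤ → ℂ) (θ : ℝ) :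
    ∑ j ∈ range M, trigPoly n c (θ + 2 * π * j / M) = M * c 0 := by
  simpa using sum_trigPoly_mul_exp_equispaced (n := n) (M := M) (l := 0) (by simp) (by simpa) c θ

end Quadrature

section TrigPoly

variable {n : ℕ} {c : ℤ → ℂ}

lemma trigPoly_sub (n : ℕ) (b a : ℤ → ℂ) (t : ℝ) :
    trigPoly n (b - a) t = trigPoly n b t - trigPoly n a t := by
  simp [trigPoly, sub_mul]

lemma trigPoly_im_eq_zero (hc : ∀ k, c (-k) = conj (c k)) (t : ℝ) : (trigPoly n c t).im = 0 := by
  rw [← conj_eq_iff_im, trigPoly, map_sum]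
  refine sum_equiv (.neg ℤ) (fun k => by simp [and_comm, neg_le]) fun k _ => ?_
  simp [hc, ← exp_conj]

lemma coeff_zero_re_nonneg (hF : ∀ t, 0 ≤ (trigPoly n c t).re) : 0 ≤ (c 0).re := by
  have hmean := congrArg re (sum_trigPoly_equispaced n.lt_succ_self c 0)
  rw [re_sum, ← ofReal_natCast, re_ofReal_mul] at hmean
  exact nonneg_of_mul_nonneg_right (hmean ▸ sum_nonneg fun j _ => hF _) (by positivity)

lemma re_mul_coeff_le_of_forall_equispaced (hc : ∀ k, c (-k) = conj (c k))
    (hF : ∀ t, 0 ≤ (trigPoly n c t).re) {l : ℤ} {M : ℕ} (hl : |l| ≤ n) (hM : n + |l| < M)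
    {u : ℂ} {L θ : ℝ} (hL : ∀ j : ℕ, (u * exp (-(I * l * ↑(θ + 2 * π * j / M)))).re ≤ L) :
    (u * c l).re ≤ L * (c 0).re := by
  have hnM : n < M := by linarith [abs_nonneg l]
  set x : ℕ → ℝ := fun j => θ + 2 * π * j / M
  set z : ℕ → ℂ := fun j => u * exp (-(I * l * x j))
  have hnonneg (j : ℕ) : 0 ≤ (trigPoly n c (x j) * (L - z j)).re := by
    rw [mul_re, trigPoly_im_eq_zero hc, zero_mul, sub_zero, sub_re, ofReal_re]
    exact mul_nonneg (hF _) (sub_nonneg.2 (hL j))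
  have hquad : ∑ j ∈ range M, trigPoly n c (x j) * (L - z j) = (M : ℝ) * (L * c 0 - u * c l) := by
    simp only [z, mul_sub, sum_sub_distrib, ← sum_mul, mul_left_comm _ u, ← mul_sum]
    rw [sum_trigPoly_equispaced hnM, sum_trigPoly_mul_exp_equispaced hl hM, ofReal_natCast]
    ring
  have hre := congrArg re hquad
  rw [re_sum, re_ofReal_mul] at hre
  have hsub := nonneg_of_mul_nonneg_right (hre ▸ sum_nonneg fun j _ => hnonneg j)
    (by exact_mod_cast Nat.zero_lt_of_lt hnM)
  rwa [sub_re, re_ofReal_mul, sub_nonneg] at hsub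

end TrigPoly

section EgervarySzasz

variable {n k : ℕ} {c : ℤ → ℂ}

lemma sin_mul_sin_consecutive_nonneg {p : ℕ} (hp : p ≠ 0) (j : ℕ) :
    0 ≤ Real.sin (j * π / p) * Real.sin ((j + 1) * π / p) := by
  have hp' : (0 : ℝ) < p := by positivity
  obtain ⟨q, r, hr, rfl⟩ : ∃ q r, r + 1 ≤ p ∧ j = r + q * p :=
    ⟨j / p, j % p, Nat.mod_lt j (by lia), (Nat.mod_add_div' j p).symm⟩
  have hr' : (r : ℝ) + 1 ≤ p := mod_cast hr
  have hshift (x : ℝ) : Real.sin ((x + q * p) * π / p) = (-1) ^ q * Real.sin (x * π / p) := by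
    rw [← Real.sin_add_nat_mul_pi]
    congr 1
    field_simp
  have hsin (x : ℝ) (hx : 0 ≤ x) (hxp : x ≤ p) : 0 ≤ Real.sin (x * π / p) := by
    refine Real.sin_nonneg_of_nonneg_of_le_pi (by positivity) ((div_le_iff₀ hp').2 ?_)
    rw [mul_comm π]
    gcongr
  have hadd : ((r + q * p : ℕ) : ℝ) + 1 = (r + 1 : ℝ) + q * p := by push_cast; ring
  rw [hadd, hshift, Nat.cast_add, Nat.cast_mul, hshift, mul_mul_mul_comm]
  exact mul_nonneg (mul_self_nonneg _)
    (mul_nonneg (hsin r (by positivity) (by linarith)) (hsin (r + 1) (by positivity) hr'))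

lemma cos_odd_mul_pi_div_le {p : ℕ} (hp : p ≠ 0) (j : ℕ) :
    Real.cos ((2 * j + 1) * π / p) ≤ Real.cos (π / p) := by
  have hdiff : Real.cos (π / p) - Real.cos ((2 * j + 1) * π / p) =
      2 * (Real.sin (j * π / p) * Real.sin ((j + 1) * π / p)) := by
    have hhalf : (π / p - (2 * j + 1) * π / p) / 2 = -(j * π / p) := by ring
    have hmid : (π / p + (2 * j + 1) * π / p) / 2 = (j + 1) * π / p := by ring
    rw [Real.cos_sub_cos, hhalf, hmid, Real.sin_neg]
    ring
  linarith [sin_mul_sin_consecutive_nonneg hp j]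

lemma exp_mul_coeff_re_le (hc : ∀ k, c (-k) = conj (c k)) (hF : ∀ t, 0 ≤ (trigPoly n c t).re)
    (hk : 1 ≤ k) (hkn : k ≤ n) (φ : ℝ) :
    (exp (I * k * φ) * c k).re ≤ egervarySzaszConst n k * (c 0).re := by
  set p := n / k + 2
  have hM : n + k < p * k := by
    have := Nat.lt_div_mul_add (a := n) (b := k) hk
    lia
  refine re_mul_coeff_le_of_forall_equispaced hc hF (l := k) (M := p * k)
    (θ := φ + π / (p * k : ℕ)) (by simpa) (by rw [Nat.abs_cast]; exact_mod_cast hM) fun j => ?_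
  set x : ℝ := φ + π / (p * k : ℕ) + 2 * π * j / (p * k : ℕ) with hx
  have hangle : k * (φ - x) = -((2 * j + 1) * π / p) := by
    have hk0 : (k : ℝ) ≠ 0 := by positivity
    have hp0 : (p : ℝ) ≠ 0 := by positivity
    rw [hx]
    push_cast
    field_simp
    ring
  have hphase : I * k * φ + -(I * (k : ℤ) * x) = ↑(-((2 * j + 1) * π / p)) * I := by
    rw [← hangle]
    push_cast
    ring
  rw [← exp_add, hphase, exp_ofReal_mul_I_re, Real.cos_neg]
  exact cos_odd_mul_pi_div_le (by lia) j

theorem norm_coeff_le_egervarySzaszConst_mul (hc : ∀ k, c (-k) = conj (c k))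
    (hF : ∀ t, 0 ≤ (trigPoly n c t).re) (hk : 1 ≤ k) (hkn : k ≤ n) :
    ‖c k‖ ≤ egervarySzaszConst n k * (c 0).re := by
  have hrot : exp (I * k * ↑(-(c k).arg / k)) * c k = ‖c k‖ := by
    have hk0 : (k : ℂ) ≠ 0 := mod_cast (by lia : k ≠ 0)
    have harg : I * k * ↑(-(c k).arg / k) = -((c k).arg * I) := by
      push_cast
      field_simp
    rw [harg, exp_neg, inv_mul_eq_iff_eq_mul₀ (exp_ne_zero _), mul_comm, norm_mul_exp_arg_mul_I]
  simpa only [hrot, ofReal_re] using exp_mul_coeff_re_le hc hF hk hkn (-(c k).arg / k)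

end EgervarySzasz

section PowerSums

lemma egervarySzaszConst_nonneg (n k : ℕ) : 0 ≤ egervarySzaszConst n k := by
  refine Real.cos_nonneg_of_neg_pi_div_two_le_of_le ?_ ?_
  · exact (neg_nonpos.2 (by positivity)).trans (by positivity)
  · gcongr
    exact_mod_cast Nat.le_add_left 2 _

lemma fm_monotoneOn (m : ℕ) : MonotoneOn (fm m) (Set.Ici 0) := fun _ hr _ _ hrt =>
  sum_le_sum fun k _ =>
    mul_le_mul_of_nonneg_right (pow_le_pow_left₀ hr hrt k) (egervarySzaszConst_nonneg (m - 1) k)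

lemma sum_mul_norm_le_of_norm_sub_le {ι E : Type*} [SeminormedAddCommGroup E] {s : Finset ι}
    {w δ : ι → ℝ} {a b : ι → E} (hw : ∀ k ∈ s, 0 ≤ w k) (hab : ∀ k ∈ s, ‖b k - a k‖ ≤ δ k) :
    ∑ k ∈ s, w k * ‖a k‖ ≤ ∑ k ∈ s, w k * ‖b k‖ + ∑ k ∈ s, w k * δ k := by
  simp only [← sum_add_distrib, ← mul_add]
  gcongr with k hk
  · exact hw k hk
  · exact (norm_le_norm_add_norm_sub (b k) (a k)).trans (by gcongr; exact hab k hk)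

end PowerSums

theorem stmt_18 (m : ℕ) (hm : 2 ≤ m) (a b : ℤ → ℂ)
    (ha : ∀ k : ℤ, a (-k) = (starRingEnd ℂ) (a k))
    (hb : ∀ k : ℤ, b (-k) = (starRingEnd ℂ) (b k))
    (hfg : ∀ t : ℝ,
      (∑ k ∈ Finset.Icc (-(m : ℤ) + 1) ((m : ℤ) - 1),
        a k * Complex.exp (Complex.I * (k : ℂ) * (t : ℂ))).re ≤
      (∑ k ∈ Finset.Icc (-(m : ℤ) + 1) ((m : ℤ) - 1),
        b k * Complex.exp (Complex.I * (k : ℂ) * (t : ℂ))).re)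
    (t : ℝ) (htm : t ∈ Set.Ioc (0 : ℝ) 1) (hts : fm m t = 1 / 2) :
    (∀ k : ℕ, 1 ≤ k → k ≤ m - 1 →
      ‖b (k : ℤ) - a (k : ℤ)‖ ≤
        ((b 0).re - (a 0).re) * Real.cos (Real.pi / (((m - 1) / k + 2 : ℕ) : ℝ))) ∧
    (∀ r : ℝ, 0 ≤ r → r ≤ t →
      (a 0).re / 2 + ∑ k ∈ Finset.Icc 1 (m - 1), r ^ k * ‖a (k : ℤ)‖ ≤
      (b 0).re / 2 + ∑ k ∈ Finset.Icc 1 (m - 1), r ^ k * ‖b (k : ℤ)‖) := by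
  have hc (k : ℤ) : (b - a) (-k) = conj ((b - a) k) := by simp [ha, hb]
  have hF (s : ℝ) : 0 ≤ (trigPoly (m - 1) (b - a) s).re := by
    have hIcc : Icc (-((m - 1 : ℕ) : ℤ)) (m - 1 : ℕ) = Icc (-(m : ℤ) + 1) (m - 1) := by
      congr 1 <;> lia
    rw [trigPoly_sub, sub_re, sub_nonneg, trigPoly, trigPoly, hIcc]
    exact hfg s
  have hcoeff (k : ℕ) (hk : 1 ≤ k) (hkm : k ≤ m - 1) :
      ‖b k - a k‖ ≤ ((b 0).re - (a 0).re) * egervarySzaszConst (m - 1) k := by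
    simpa [mul_comm] using norm_coeff_le_egervarySzaszConst_mul hc hF hk hkm
  refine ⟨hcoeff, fun r hr hrt => ?_⟩
  have hmean : 0 ≤ (b 0).re - (a 0).re := coeff_zero_re_nonneg hF
  have hfm : fm m r ≤ 1 / 2 := hts ▸ fm_monotoneOn m hr (hr.trans hrt) hrt
  have hsum := sum_mul_norm_le_of_norm_sub_le (fun k _ => pow_nonneg hr k)
    fun k hk => hcoeff k (mem_Icc.1 hk).1 (mem_Icc.1 hk).2
  have hfactor : ∑ k ∈ Icc 1 (m - 1),
      r ^ k * (((b 0).re - (a 0).re) * egervarySzaszConst (m - 1) k) =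
        ((b 0).re - (a 0).re) * fm m r := by
    simp only [fm, egervarySzaszConst, mul_sum, mul_left_comm]
  linarith [mul_le_mul_of_nonneg_left hfm hmean]
end

section
/- Let f and g be real-valued integrable functions on the circle (i.e., f, g ∈ L¹(𝕋) with real values almost everywhere) with Fourier coefficients f̂(k) and ĝ(k), k ∈ ℤ (so f̂(0) and ĝ(0) are real). If f ≤ g almost everywhere, then: (i) |ĝ(k) − f̂(k)| ≤ ĝ(0) − f̂(0) for every k ∈ ℤ with k ≠ 0; and (ii) f̂(0)/2 + ∑_{k=1}^∞ r^k |f̂(k)| ≤ ĝ(0)/2 + ∑_{k=1}^∞ r^k |ĝ(k)| for every r ∈ [0, 1/3]. -/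
open scoped BigOperators

instance : Fact (0 < 2 * Real.pi) := ⟨by positivity⟩

/-!
Since `g - f ≥ 0`, the triangle inequality for the integral bounds every Fourier coefficient of
`g - f` by its mean `D`. Hence `|f̂(k)| ≤ |ĝ(k)| + D` for all `k`, and a weighted sum of these
inequalities with nonnegative weights of total mass at most `c` costs at most `c * D`, which is
what the term `c * f̂(0)` gains when `f` is replaced by `g`. For the weights `r ^ k`, `k ≥ 1`, the
mass is `r / (1 - r)`, which is at most `1 / 2` exactly when `r ≤ 1 / 3`.
-/

section WeightedSums

variable {ι E : Type*} [SeminormedAddCommGroup E] {w : ι → ℝ} {a b : ι → E}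

theorem summable_mul_norm_of_norm_le {C : ℝ} (hw₀ : 0 ≤ w) (hw : Summable w)
    (ha : ∀ i, ‖a i‖ ≤ C) : Summable fun i => w i * ‖a i‖ :=
  (hw.mul_right C).of_nonneg_of_le (fun i => mul_nonneg (hw₀ i) (norm_nonneg _))
    fun i => mul_le_mul_of_nonneg_left (ha i) (hw₀ i)

theorem tsum_mul_norm_le_add_of_norm_sub_le {D : ℝ} (hw₀ : 0 ≤ w) (hw : Summable w)
    (ha : Summable fun i => w i * ‖a i‖) (hb : Summable fun i => w i * ‖b i‖)
    (hab : ∀ i, ‖a i - b i‖ ≤ D) :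
    ∑' i, w i * ‖a i‖ ≤ ∑' i, w i * ‖b i‖ + (∑' i, w i) * D := by
  have hterm (i : ι) : w i * ‖a i‖ ≤ w i * ‖b i‖ + w i * D := by
    rw [← mul_add]
    exact mul_le_mul_of_nonneg_left
      ((norm_le_norm_add_norm_sub' _ _).trans (add_le_add_right (hab i) _)) (hw₀ i)
  calc ∑' i, w i * ‖a i‖ ≤ ∑' i, (w i * ‖b i‖ + w i * D) :=
        ha.tsum_le_tsum hterm (hb.add (hw.mul_right D))
    _ = ∑' i, w i * ‖b i‖ + (∑' i, w i) * D := by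
        rw [hb.tsum_add (hw.mul_right D), tsum_mul_right]

end WeightedSums

theorem hasSum_pow_succ_of_lt_one {r : ℝ} (hr₀ : 0 ≤ r) (hr₁ : r < 1) :
    HasSum (fun k : ℕ => r ^ (k + 1)) (r / (1 - r)) := by
  simpa only [pow_succ', div_eq_mul_inv] using (hasSum_geometric_of_lt_one hr₀ hr₁).mul_left r

theorem div_one_sub_le_inv_two {r : ℝ} (hr : r ≤ 1 / 3) : r / (1 - r) ≤ 2⁻¹ := by
  rw [div_le_iff₀ (by linarith)]
  linarith

section FourierCoefficients

open MeasureTheory AddCircle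

variable {T : ℝ} [Fact (0 < T)]

section VectorValued

variable {E : Type*} [NormedAddCommGroup E] [NormedSpace ℂ E]

theorem fourierCoeff_sub {f g : AddCircle T → E} (hf : Integrable f haarAddCircle)
    (hg : Integrable g haarAddCircle) :
    fourierCoeff (f - g) = fourierCoeff f - fourierCoeff g := by
  rw [eq_sub_iff_add_eq, ← fourierCoeff.add (hf.sub hg) hg, sub_add_cancel]

theorem fourierCoeff_zero_eq_integral (f : AddCircle T → E) :
    fourierCoeff f 0 = ∫ x, f x ∂haarAddCircle := by
  simp only [fourierCoeff, neg_zero, fourier_zero, one_smul]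

theorem norm_fourierCoeff_le_integral_norm (f : AddCircle T → E) (k : ℤ) :
    ‖fourierCoeff f k‖ ≤ ∫ x, ‖f x‖ ∂haarAddCircle := by
  simpa only [fourierCoeff, fourier_apply, Circle.norm_smul, norm_smul, Circle.norm_coe, one_mul]
    using norm_integral_le_integral_norm (μ := haarAddCircle) fun x => fourier (-k) x • f x

end VectorValued

variable {f g : AddCircle T → ℝ}

theorem re_fourierCoeff_ofReal_zero (f : AddCircle T → ℝ) :
    (fourierCoeff (fun x => (f x : ℂ)) 0).re = ∫ x, f x ∂haarAddCircle := by
  rw [fourierCoeff_zero_eq_integral, integral_complex_ofReal, Complex.ofReal_re]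

theorem norm_fourierCoeff_sub_le_of_ae_le (hf : Integrable f haarAddCircle)
    (hg : Integrable g haarAddCircle) (hle : f ≤ᵐ[haarAddCircle] g) (k : ℤ) :
    ‖fourierCoeff (fun x => (g x : ℂ)) k - fourierCoeff (fun x => (f x : ℂ)) k‖ ≤
      (fourierCoeff (fun x => (g x : ℂ)) 0).re - (fourierCoeff (fun x => (f x : ℂ)) 0).re := by
  have habs : ∀ᵐ x ∂haarAddCircle, ‖(g x : ℂ) - f x‖ = g x - f x := by
    filter_upwards [hle] with x hx
    rw [← Complex.ofReal_sub, Complex.norm_of_nonneg (sub_nonneg.2 hx)]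
  calc ‖fourierCoeff (fun x => (g x : ℂ)) k - fourierCoeff (fun x => (f x : ℂ)) k‖
      = ‖fourierCoeff ((fun x => (g x : ℂ)) - fun x => (f x : ℂ)) k‖ := by
        rw [fourierCoeff_sub hg.ofReal hf.ofReal, Pi.sub_apply]
    _ ≤ ∫ x, ‖(g x : ℂ) - f x‖ ∂haarAddCircle := norm_fourierCoeff_le_integral_norm _ k
    _ = ∫ x, (g x - f x) ∂haarAddCircle := integral_congr_ae habs
    _ = _ := by rw [integral_sub hg hf, re_fourierCoeff_ofReal_zero, re_fourierCoeff_ofReal_zero]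

theorem summable_mul_norm_fourierCoeff {ι E : Type*} [NormedAddCommGroup E] [NormedSpace ℂ E]
    {w : ι → ℝ} (hw₀ : 0 ≤ w) (hw : Summable w) (f : AddCircle T → E) (n : ι → ℤ) :
    Summable fun i => w i * ‖fourierCoeff f (n i)‖ :=
  summable_mul_norm_of_norm_le hw₀ hw fun i => norm_fourierCoeff_le_integral_norm f (n i)

theorem mul_re_fourierCoeff_zero_add_tsum_le_of_ae_le {ι : Type*} {w : ι → ℝ} {c : ℝ}
    (hw₀ : 0 ≤ w) (hw : Summable w) (hwc : ∑' i, w i ≤ c) (n : ι → ℤ)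
    (hf : Integrable f haarAddCircle) (hg : Integrable g haarAddCircle)
    (hle : f ≤ᵐ[haarAddCircle] g) :
    c * (fourierCoeff (fun x => (f x : ℂ)) 0).re +
        ∑' i, w i * ‖fourierCoeff (fun x => (f x : ℂ)) (n i)‖ ≤
      c * (fourierCoeff (fun x => (g x : ℂ)) 0).re +
        ∑' i, w i * ‖fourierCoeff (fun x => (g x : ℂ)) (n i)‖ := by
  have hbound := norm_fourierCoeff_sub_le_of_ae_le hf hg hle
  have hsum := tsum_mul_norm_le_add_of_norm_sub_le hw₀ hw
    (summable_mul_norm_fourierCoeff hw₀ hw (fun x => (f x : ℂ)) n)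
    (summable_mul_norm_fourierCoeff hw₀ hw (fun x => (g x : ℂ)) n)
    fun i => (norm_sub_rev _ _).trans_le (hbound (n i))
  have hmass := mul_le_mul_of_nonneg_right hwc ((norm_nonneg _).trans (hbound 0))
  linarith

theorem stmt_19_general (hf : Integrable f haarAddCircle) (hg : Integrable g haarAddCircle)
    (hle : f ≤ᵐ[haarAddCircle] g) :
    (∀ k : ℤ,
      ‖fourierCoeff (fun x => (g x : ℂ)) k - fourierCoeff (fun x => (f x : ℂ)) k‖ ≤
        (fourierCoeff (fun x => (g x : ℂ)) 0).re - (fourierCoeff (fun x => (f x : ℂ)) 0).re) ∧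
    (∀ r c : ℝ, 0 ≤ r → r < 1 → r / (1 - r) ≤ c →
      Summable (fun k : ℕ =>
        r ^ (k + 1) * ‖fourierCoeff (fun x => (f x : ℂ)) ((k : ℤ) + 1)‖) ∧
      Summable (fun k : ℕ =>
        r ^ (k + 1) * ‖fourierCoeff (fun x => (g x : ℂ)) ((k : ℤ) + 1)‖) ∧
      c * (fourierCoeff (fun x => (f x : ℂ)) 0).re +
        ∑' k : ℕ, r ^ (k + 1) * ‖fourierCoeff (fun x => (f x : ℂ)) ((k : ℤ) + 1)‖ ≤
      c * (fourierCoeff (fun x => (g x : ℂ)) 0).re +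
        ∑' k : ℕ, r ^ (k + 1) * ‖fourierCoeff (fun x => (g x : ℂ)) ((k : ℤ) + 1)‖) := by
  refine ⟨norm_fourierCoeff_sub_le_of_ae_le hf hg hle, fun r c hr₀ hr₁ hc => ?_⟩
  have hmass := hasSum_pow_succ_of_lt_one hr₀ hr₁
  have hnonneg : 0 ≤ fun k : ℕ => r ^ (k + 1) := fun k => pow_nonneg hr₀ (k + 1)
  exact ⟨summable_mul_norm_fourierCoeff hnonneg hmass.summable _ _,
    summable_mul_norm_fourierCoeff hnonneg hmass.summable _ _,
    mul_re_fourierCoeff_zero_add_tsum_le_of_ae_le hnonneg hmass.summable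
      (hmass.tsum_eq.trans_le hc) _ hf hg hle⟩

end FourierCoefficients

theorem stmt_19 (f g : AddCircle (2 * Real.pi) → ℝ)
    (hf : MeasureTheory.Integrable f AddCircle.haarAddCircle)
    (hg : MeasureTheory.Integrable g AddCircle.haarAddCircle)
    (hle : ∀ᵐ x ∂(AddCircle.haarAddCircle), f x ≤ g x) :
    (∀ k : ℤ, k ≠ 0 →
      ‖fourierCoeff (fun x => (g x : ℂ)) k -
          fourierCoeff (fun x => (f x : ℂ)) k‖ ≤
        (fourierCoeff (fun x => (g x : ℂ)) 0).re -
          (fourierCoeff (fun x => (f x : ℂ)) 0).re) ∧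
    (∀ r : ℝ, 0 ≤ r → r ≤ 1 / 3 →
      Summable (fun k : ℕ =>
        r ^ (k + 1) * ‖fourierCoeff (fun x => (f x : ℂ)) ((k : ℤ) + 1)‖) ∧
      Summable (fun k : ℕ =>
        r ^ (k + 1) * ‖fourierCoeff (fun x => (g x : ℂ)) ((k : ℤ) + 1)‖) ∧
      (fourierCoeff (fun x => (f x : ℂ)) 0).re / 2 +
        ∑' k : ℕ, r ^ (k + 1) * ‖fourierCoeff (fun x => (f x : ℂ)) ((k : ℤ) + 1)‖ ≤
      (fourierCoeff (fun x => (g x : ℂ)) 0).re / 2 +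
        ∑' k : ℕ, r ^ (k + 1) * ‖fourierCoeff (fun x => (g x : ℂ)) ((k : ℤ) + 1)‖) := by
  obtain ⟨hcoeff, hsum⟩ := stmt_19_general hf hg hle
  refine ⟨fun k _ => hcoeff k, fun r hr₀ hr => ?_⟩
  simpa only [div_eq_inv_mul] using
    hsum r 2⁻¹ hr₀ (by linarith) (div_one_sub_le_inv_two hr)
end
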